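/- Let (𝒳, μ) be a measure space, let σ₁, σ₀ : 𝒳 → (0,∞) be measurable, and let q : 𝒳 → [0,∞) be a measurable probability density with respect to μ such that 0 < ∫ (σ₁ + σ₀) q dμ < ∞. Define the efficient propensity score w*(1|x) = σ₁(x)/(σ₁(x)+σ₀(x)), w*(0|x) = σ₀(x)/(σ₁(x)+σ₀(x)), and the efficient covariate density p*(x) = (σ₁(x)+σ₀(x)) q(x) / ∫ (σ₁+σ₀) q dμ. Then p* is a probability density with respect to μ, and the efficiency bound at (w*, p*) satisfies ∫ (σ₁(x)²/w*(1|x) + σ₀(x)²/w*(0|x)) · q(x)²/p*(x) dμ(x) = (∫ (σ₁(x)+σ₀(x)) q(x) dμ(x))². -/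

import Mathlib

open MeasureTheory

/-- The efficient propensity score `w*(1|x) = σ₁(x)/(σ₁(x)+σ₀(x))`,
`w*(0|x) = σ₀(x)/(σ₁(x)+σ₀(x))` and the efficient covariate density
`p*(x) = (σ₁(x)+σ₀(x)) q(x) / ∫ (σ₁+σ₀) q dμ` form a probability density, and the
efficiency bound at `(w*, p*)` equals `(∫ (σ₁+σ₀) q dμ)²`. -/
theorem minimized_efficiency_bound_value
    {𝒳 : Type*} [MeasurableSpace 𝒳] (μ : Measure 𝒳)
    (σ₁ σ₀ q : 𝒳 → ℝ)
    (hσ₁m : Measurable σ₁) (hσ₀m : Measurable σ₀)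
    (hσ₁ : ∀ x, 0 < σ₁ x) (hσ₀ : ∀ x, 0 < σ₀ x)
    (hqm : Measurable q) (hq0 : ∀ x, 0 ≤ q x)
    (hqint : Integrable q μ) (hq1 : ∫ x, q x ∂μ = 1)
    (hint : Integrable (fun x => (σ₁ x + σ₀ x) * q x) μ)
    (hpos : 0 < ∫ x, (σ₁ x + σ₀ x) * q x ∂μ) :
    (∫ x, (σ₁ x + σ₀ x) * q x / (∫ y, (σ₁ y + σ₀ y) * q y ∂μ) ∂μ = 1) ∧
    ∫ x, (σ₁ x ^ 2 / (σ₁ x / (σ₁ x + σ₀ x)) + σ₀ x ^ 2 / (σ₀ x / (σ₁ x + σ₀ x))) *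
        (q x ^ 2 / ((σ₁ x + σ₀ x) * q x / (∫ y, (σ₁ y + σ₀ y) * q y ∂μ))) ∂μ =
      (∫ x, (σ₁ x + σ₀ x) * q x ∂μ) ^ 2 := by
  refine ⟨?_, ?_⟩
  · rw [integral_div, div_self hpos.ne']
  · generalize hI : (∫ y, (σ₁ y + σ₀ y) * q y ∂μ) = I at hpos ⊢
    have key : ∀ x, (σ₁ x ^ 2 / (σ₁ x / (σ₁ x + σ₀ x)) + σ₀ x ^ 2 / (σ₀ x / (σ₁ x + σ₀ x))) *
        (q x ^ 2 / ((σ₁ x + σ₀ x) * q x / I)) = I * ((σ₁ x + σ₀ x) * q x) := by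
      intro x
      have h1 := (hσ₁ x).ne'
      have h0 := (hσ₀ x).ne'
      have hs : σ₁ x + σ₀ x ≠ 0 := (add_pos (hσ₁ x) (hσ₀ x)).ne'
      have hI0 := hpos.ne'
      by_cases hq : q x = 0
      · simp [hq]
      · field_simp
    simp_rw [key]
    rw [integral_const_mul, hI, sq]
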